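/- Fix an integer k ≥ 0 and for 0 ≤ j ≤ k let L_j denote the number of chords of length j in the uniformly random chord diagram C_n of size n. Then the vector (L_0, L_1, …, L_k) converges in distribution, as n→∞, to (T_0, T_1, …, T_k) where the T_i are independent Poisson random variables with mean 1; that is, for all nonnegative integers m_0,…,m_k, lim_{n→∞} P(L_0=m_0, …, L_k=m_k) = ∏_{i=0}^{k} e^{−1}/m_i!. -/

import Mathlib

open scoped Classical
open Finset Filter

/-- A chord diagram of size `n`: a fixed-point-free involution of the `2n`
endpoints `0, 1, …, 2n-1` (endpoint `i` here corresponds to the label `i+1`). -/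
abbrev ChordDiagram (n : ℕ) :=
  {f : Fin (2*n) → Fin (2*n) // (∀ i, f (f i) = i) ∧ ∀ i, f i ≠ i}

/-- `c` lies strictly between `a` and `b`. -/
def Between {m : ℕ} (a b c : Fin m) : Prop := min a b < c ∧ c < max a b

/-- The chord of `C` containing endpoint `x` crosses the chord containing endpoint `u`:
exactly one of the two endpoints `u`, `C u` lies strictly between `x` and `C x`. -/
def Crosses {n : ℕ} (C : ChordDiagram n) (x u : Fin (2*n)) : Prop :=
  Xor' (Between x (C.1 x) u) (Between x (C.1 x) (C.1 u))

/-- Uniform probability of an event over all chord diagrams of size `n`. -/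
noncomputable def prob (n : ℕ) (E : ChordDiagram n → Prop) : ℝ :=
  ((Finset.univ.filter E).card : ℝ) / ((Finset.univ : Finset (ChordDiagram n)).card : ℝ)

/-- The degree of the chord of `C` containing endpoint `x`: the number of chords
crossing it (each chord counted once via its smaller endpoint). -/
noncomputable def chordDegree {n : ℕ} (C : ChordDiagram n) (x : Fin (2*n)) : ℕ :=
  (Finset.univ.filter fun u => u < C.1 u ∧ Crosses C x u).card

/-- The length of the chord of `C` containing endpoint `x`: the number of endpoints
on the smaller of the two arcs it determines. -/
def chordLength {n : ℕ} (C : ChordDiagram n) (x : Fin (2*n)) : ℕ :=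
  min (max (x:ℕ) (C.1 x : ℕ) - min (x:ℕ) (C.1 x : ℕ) - 1)
      (2*n - (max (x:ℕ) (C.1 x : ℕ) - min (x:ℕ) (C.1 x : ℕ)) - 1)

/-- Degree of the chord containing endpoint `1` (index `0`). -/
noncomputable def degreeC1 (n : ℕ) (C : ChordDiagram n) : ℕ :=
  if h : 0 < n then chordDegree C ⟨0, by omega⟩ else 0

/-- Length of the chord containing endpoint `1` (index `0`). -/
noncomputable def lengthC1 (n : ℕ) (C : ChordDiagram n) : ℕ :=
  if h : 0 < n then chordLength C ⟨0, by omega⟩ else 0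

/-- Membership in the component (w.r.t. the crossing relation) of the chord
containing the root endpoint. -/
def InRootComponent {n : ℕ} (C : ChordDiagram n) (root x : Fin (2*n)) : Prop :=
  x = root ∨ x = C.1 root ∨ Relation.ReflTransGen (fun a b => Crosses C a b) root x

/-- The chord containing `x` is simple: it joins two (cyclically) consecutive endpoints. -/
def IsSimple {n : ℕ} (C : ChordDiagram n) (x : Fin (2*n)) : Prop :=
  (C.1 x : ℕ) = ((x : ℕ) + 1) % (2*n) ∨ (x : ℕ) = ((C.1 x : ℕ) + 1) % (2*n)

/-- `C` is monolithic (with respect to `root`): every chord not in the root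
component is simple, and no two simple chords are next to each other. -/
def Monolithic {n : ℕ} (C : ChordDiagram n) (root : Fin (2*n)) : Prop :=
  (∀ x : Fin (2*n), ¬ InRootComponent C root x → IsSimple C x) ∧
  ¬ ∃ i : Fin (2*n), (C.1 i : ℕ) = ((i : ℕ) + 1) % (2*n) ∧
      ∃ j : Fin (2*n), (j : ℕ) = ((i : ℕ) + 2) % (2*n) ∧ (C.1 j : ℕ) = ((i : ℕ) + 3) % (2*n)

/-- `L_j`: the number of chords of length `j` in `C`. -/
noncomputable def lengthCount (n : ℕ) (j : ℕ) (C : ChordDiagram n) : ℕ :=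
  (Finset.univ.filter fun x : Fin (2*n) => x < C.1 x ∧ chordLength C x = j).card

/-- The endpoints of chords of `C` of length at least `k`. -/
noncomputable def lenAtLeast (n k : ℕ) (C : ChordDiagram n) : Finset (Fin (2*n)) :=
  Finset.univ.filter fun x => k ≤ chordLength C x

/-- The number of chords with endpoints in `S` crossing the chord containing `x`. -/
noncomputable def degreeIn {n : ℕ} (C : ChordDiagram n) (S : Finset (Fin (2*n)))
    (x : Fin (2*n)) : ℕ :=
  (S.filter fun u => u < C.1 u ∧ Crosses C x u).card

/-- `S` (a chord-closed set of endpoints) is a set of chords each crossing at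
least `k` other chords of `S`. -/
def IsCore {n : ℕ} (C : ChordDiagram n) (k : ℕ) (S : Finset (Fin (2*n))) : Prop :=
  (∀ x ∈ S, C.1 x ∈ S) ∧ ∀ x ∈ S, k ≤ degreeIn C S x

/-- The `k`-core: the union of all sets of chords in which every chord crosses
at least `k` other chords of the set. -/
noncomputable def kCore (n k : ℕ) (C : ChordDiagram n) : Finset (Fin (2*n)) :=
  Finset.univ.filter fun x => ∃ S : Finset (Fin (2*n)), IsCore C k S ∧ x ∈ S

/-- The number of chords in the `k`-core of `C`. -/
noncomputable def kCoreSize (n k : ℕ) (C : ChordDiagram n) : ℕ :=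
  ((kCore n k C).filter fun x => x < C.1 x).card

/-- `Z_k`: the number of chords of length strictly less than `k`. -/
noncomputable def shortCount (n k : ℕ) (C : ChordDiagram n) : ℕ :=
  (Finset.univ.filter fun x : Fin (2*n) => x < C.1 x ∧ chordLength C x < k).card

/-- `C` contains a balanced clique of size `m`: a set of `m` pairwise crossing
chords with exactly one endpoint in each of the `2m` blocks of length `⌊n/m⌋`. -/
def HasBalancedClique (n m : ℕ) (C : ChordDiagram n) : Prop :=
  ∃ S : Finset (Fin (2*n)),
    (∀ x ∈ S, C.1 x ∈ S) ∧
    (∀ x ∈ S, ∀ u ∈ S, u ≠ x → u ≠ C.1 x → Crosses C x u) ∧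
    (∀ t : ℕ, 1 ≤ t → t ≤ 2*m →
      (S.filter fun x => (t-1) * (n/m) ≤ (x:ℕ) ∧ (x:ℕ) < t * (n/m)).card = 1)

/-- An oriented chord diagram: a chord diagram together with auxiliary fair-coin
bits; the bit attached to a crossing pair of chords (indexed by their smaller
endpoints) decides which chord over-crosses the other. -/
abbrev OrientedChordDiagram (n : ℕ) := ChordDiagram n × (Fin (2*n) → Fin (2*n) → Bool)

/-- The smaller endpoint of the chord of `C` containing `x`. -/
def chordRep {n : ℕ} (C : ChordDiagram n) (x : Fin (2*n)) : Fin (2*n) := min x (C.1 x)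

/-- In the oriented diagram `D`, the chord containing `x` crosses and
over-crosses the chord containing `u`. -/
def OverD {n : ℕ} (D : OrientedChordDiagram n) (x u : Fin (2*n)) : Prop :=
  Crosses D.1 x u ∧
    ((chordRep D.1 x ≤ chordRep D.1 u ∧ D.2 (chordRep D.1 x) (chordRep D.1 u) = true) ∨
     (chordRep D.1 u < chordRep D.1 x ∧ D.2 (chordRep D.1 u) (chordRep D.1 x) = false))

/-- Uniform probability of an event over all oriented chord diagrams of size `n`
(this yields a uniformly random diagram with each crossing oriented by an
independent fair coin). -/
noncomputable def probD (n : ℕ) (E : OrientedChordDiagram n → Prop) : ℝ :=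
  ((Finset.univ.filter E).card : ℝ) /
    ((Finset.univ : Finset (OrientedChordDiagram n)).card : ℝ)

/-- The chords (given by their endpoints in `S`) are strongly connected in the
directed intersection graph of `D`, using only chords of `S`. -/
def StronglyConnectedIn {n : ℕ} (D : OrientedChordDiagram n) (S : Set (Fin (2*n))) : Prop :=
  ∀ c ∈ S, ∀ d ∈ S,
    Relation.ReflTransGen (fun a b => a ∈ S ∧ b ∈ S ∧ OverD D a b) c d

/-- The number of chords with both endpoints in the cyclic block
`{i, i+1, …, i+t-1}` (mod `2n`). -/
noncomputable def chordsInBlock (n : ℕ) (C : ChordDiagram n) (i t : ℕ) : ℕ :=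
  (Finset.univ.filter fun x : Fin (2*n) => x < C.1 x ∧
    (∃ a < t, (x:ℕ) = (i + a) % (2*n)) ∧ (∃ a < t, ((C.1 x : ℕ)) = (i + a) % (2*n))).card

/-- The chord of `x` reaches the chord of `u` in the directed intersection graph
(of the whole diagram); endpoints of the same chord represent the same vertex. -/
def ReachChord {n : ℕ} (D : OrientedChordDiagram n) (x u : Fin (2*n)) : Prop :=
  u = x ∨ u = D.1.1 x ∨ Relation.ReflTransGen (fun a b => OverD D a b) x u

/-- The chords of `x` and `u` lie in the same strong component. -/
def MutualReach {n : ℕ} (D : OrientedChordDiagram n) (x u : Fin (2*n)) : Prop :=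
  ReachChord D x u ∧ ReachChord D u x

/-- The number of single-chord strong components of `D`. -/
noncomputable def singleCount (n : ℕ) (D : OrientedChordDiagram n) : ℕ :=
  (Finset.univ.filter fun x : Fin (2*n) =>
    x < D.1.1 x ∧ ∀ u : Fin (2*n), u ≠ x → u ≠ D.1.1 x → ¬ MutualReach D x u).card

/-
The law of a random vector `X` of natural numbers is the alternating series
`P(X = m) = ∑_q ∏ⱼ (-1)^qⱼ C(mⱼ + qⱼ, mⱼ) E[∏ⱼ C(Xⱼ, mⱼ + qⱼ)]` in its joint binomial moments, so
Poisson limits follow by dominated convergence once these moments converge to `∏ⱼ 1 / rⱼ!` and are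
bounded by `∏ⱼ A ^ rⱼ / rⱼ!`. For the numbers of short chords, such a moment is the expected number
of families of `R = ∑ⱼ rⱼ` candidate chords contained in the diagram. Of the roughly
`∏ⱼ (2n) ^ rⱼ / rⱼ!` families, only a fraction `O(1/n)` has two chords sharing an endpoint; these
never occur, whereas `R` disjoint chords occur together with probability
`1 / ((2n - 1)(2n - 3)⋯(2n - 2R + 1)) ~ (2n) ^ (-R)`.
-/

open scoped BigOperators Topology Nat

section ProductSeries

variable {ι β : Type*} [Fintype ι]

lemma tendsto_piFinset_const_atTop :
    Tendsto (fun s : Finset β => Fintype.piFinset fun _ : ι => s) atTop atTop := by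
  refine tendsto_atTop_finset_of_monotone
    (fun s t hst => Fintype.piFinset_subset _ _ fun _ => hst) fun r => ?_
  exact ⟨univ.image r, Fintype.mem_piFinset.2 fun j => mem_image_of_mem r (mem_univ j)⟩

lemma summable_pi_prod_of_nonneg {f : ι → β → ℝ} (hf₀ : ∀ j b, 0 ≤ f j b)
    (hf : ∀ j, Summable (f j)) : Summable fun r : ι → β => ∏ j, f j (r j) := by
  refine summable_of_sum_le (c := ∏ j, ∑' b, f j b)
    (fun r => prod_nonneg fun j _ => hf₀ j (r j)) fun u => ?_
  obtain ⟨s, hs⟩ : ∃ s : Finset β, u ⊆ Fintype.piFinset fun _ => s :=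
    (tendsto_piFinset_const_atTop.eventually (eventually_ge_atTop u)).exists
  calc ∑ r ∈ u, ∏ j, f j (r j)
      ≤ ∑ r ∈ Fintype.piFinset fun _ : ι => s, ∏ j, f j (r j) :=
        sum_le_sum_of_subset_of_nonneg hs fun r _ _ => prod_nonneg fun j _ => hf₀ j (r j)
    _ = ∏ j, ∑ b ∈ s, f j b := (prod_univ_sum _ _).symm
    _ ≤ ∏ j, ∑' b, f j b :=
        prod_le_prod (fun j _ => sum_nonneg fun b _ => hf₀ j b)
          fun j _ => (hf j).sum_le_tsum s fun b _ => hf₀ j b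

lemma hasSum_pi_prod {f : ι → β → ℝ} {a : ι → ℝ} (hf : ∀ j, HasSum (f j) (a j)) :
    HasSum (fun r : ι → β => ∏ j, f j (r j)) (∏ j, a j) := by
  have summable : Summable fun r : ι → β => ∏ j, f j (r j) := by
    refine Summable.of_norm ?_
    simpa only [norm_prod] using
      summable_pi_prod_of_nonneg (fun j b => norm_nonneg (f j b)) fun j => (hf j).summable.norm
  have boxes : Tendsto (fun s : Finset β => ∑ r ∈ Fintype.piFinset fun _ : ι => s, ∏ j, f j (r j))
      atTop (𝓝 (∏ j, a j)) := by
    simp only [← prod_univ_sum]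
    exact tendsto_finsetProd univ fun j _ => hf j
  rw [← tendsto_nhds_unique (summable.hasSum.comp tendsto_piFinset_const_atTop) boxes]
  exact summable.hasSum

end ProductSeries

section BinomialMoments

lemma choose_mul_pow_div_factorial (x : ℝ) (m q : ℕ) :
    ((m + q).choose m : ℝ) * (x ^ (m + q) / (m + q)!) = x ^ m / m ! * (x ^ q / q !) := by
  have h : ((m + q).choose m : ℝ) * m ! * q ! = (m + q)! := by
    exact_mod_cast (by simpa using Nat.choose_mul_factorial_mul_factorial (Nat.le_add_right m q))
  rw [← h, pow_add]
  have : ((m + q).choose m : ℝ) ≠ 0 := by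
    exact_mod_cast (Nat.choose_pos (Nat.le_add_right m q)).ne'
  field_simp

lemma hasSum_alternating_choose_mul_choose (L m : ℕ) :
    HasSum (fun q : ℕ => (-1 : ℝ) ^ q * (m + q).choose m * L.choose (m + q))
      (if L = m then 1 else 0) := by
  have term (q : ℕ) : (-1 : ℝ) ^ q * (m + q).choose m * L.choose (m + q) =
      L.choose m * ((-1) ^ q * (L - m).choose q) := by
    have h : (L.choose (m + q) * (m + q).choose m : ℝ) = L.choose m * (L - m).choose q := by
      exact_mod_cast (by simpa using Nat.choose_mul (n := L) (Nat.le_add_right m q))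
    linear_combination (-1 : ℝ) ^ q * h
  have alternating : ∑ q ∈ range (L - m + 1), (-1 : ℝ) ^ q * (L - m).choose q =
      if L - m = 0 then 1 else 0 := by
    exact_mod_cast Int.alternating_sum_range_choose (n := L - m)
  have total : (L.choose m : ℝ) * (if L - m = 0 then 1 else 0) = if L = m then 1 else 0 := by
    rcases lt_trichotomy L m with h | h | h
    · simp [Nat.choose_eq_zero_of_lt h, h.ne]
    · simp [h]
    · simp [Nat.sub_ne_zero_of_lt h, h.ne']
  simp only [term]
  rw [← total, ← alternating]
  refine (hasSum_sum_of_ne_finset_zero fun q hq => ?_).mul_left _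
  rw [Nat.choose_eq_zero_of_lt (by simpa using hq), Nat.cast_zero, mul_zero]

lemma hasSum_alternating_choose_mul_pow_div_factorial (μ : ℝ) (m : ℕ) :
    HasSum (fun q : ℕ => (-1 : ℝ) ^ q * (m + q).choose m * (μ ^ (m + q) / (m + q)!))
      (Real.exp (-μ) * μ ^ m / m !) := by
  have term (q : ℕ) : (-1 : ℝ) ^ q * (m + q).choose m * (μ ^ (m + q) / (m + q)!) =
      μ ^ m / m ! * ((-μ) ^ q / q !) := by
    rw [mul_assoc, choose_mul_pow_div_factorial, neg_pow μ q]
    ring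
  have exp_series : HasSum (fun q : ℕ => (-μ) ^ q / (q ! : ℝ)) (Real.exp (-μ)) := by
    simpa only [Real.exp_eq_exp_ℝ] using NormedSpace.expSeries_div_hasSum_exp (-μ)
  simp only [term]
  rw [mul_comm (Real.exp (-μ)), ← div_mul_eq_mul_div]
  exact exp_series.mul_left _

variable {Ω ι : Type*} [Fintype Ω] [Fintype ι]

/-- The joint binomial moment `E[∏ⱼ (Xⱼ choose rⱼ)]` of a random vector `X` of natural numbers on a
finite set `Ω` carrying the uniform distribution. For counting variables it is more convenient than
the factorial moment, from which it differs by the factor `∏ⱼ rⱼ!`. -/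
noncomputable def binomialMoment (X : Ω → ι → ℕ) (r : ι → ℕ) : ℝ :=
  𝔼 ω, ∏ j, ((X ω j).choose (r j) : ℝ)

lemma binomialMoment_nonneg (X : Ω → ι → ℕ) (r : ι → ℕ) : 0 ≤ binomialMoment X r :=
  expect_nonneg fun _ _ => prod_nonneg fun _ _ => Nat.cast_nonneg _

lemma hasSum_binomialMoment_inversion (X : Ω → ι → ℕ) (m : ι → ℕ) :
    HasSum (fun q : ι → ℕ =>
        (∏ j, (-1 : ℝ) ^ q j * (m j + q j).choose (m j)) * binomialMoment X (m + q))
      (𝔼 ω, if X ω = m then 1 else 0) := by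
  have pointwise (ω : Ω) : HasSum (fun q : ι → ℕ =>
      (∏ j, (-1 : ℝ) ^ q j * (m j + q j).choose (m j)) * ∏ j, ((X ω j).choose (m j + q j) : ℝ))
      (if X ω = m then 1 else 0) := by
    simpa only [prod_mul_distrib, Fintype.prod_ite_zero, prod_const_one, ← funext_iff] using
      hasSum_pi_prod fun j => hasSum_alternating_choose_mul_choose (X ω j) (m j)
  simp only [binomialMoment, expect_eq_sum_div_card, Pi.add_apply, ← mul_div_assoc, mul_sum]
  exact (hasSum_sum fun ω _ => pointwise ω).div_const _

end BinomialMoments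

theorem tendsto_expect_eq_poisson_of_tendsto_binomialMoment {κ ι : Type*} [Fintype ι]
    {l : Filter κ} {Ω : κ → Type*} [∀ n, Fintype (Ω n)] {X : ∀ n, Ω n → ι → ℕ} {μ A : ι → ℝ}
    (hbound : ∀ᶠ n in l, ∀ r, binomialMoment (X n) r ≤ ∏ j, A j ^ r j / (r j)!)
    (hlim : ∀ r, Tendsto (fun n => binomialMoment (X n) r) l (𝓝 (∏ j, μ j ^ r j / (r j)!)))
    (m : ι → ℕ) :
    Tendsto (fun n => 𝔼 ω, if X n ω = m then (1 : ℝ) else 0) l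
      (𝓝 (∏ j, Real.exp (-μ j) * μ j ^ m j / (m j)!)) := by
  have limit : HasSum (fun q : ι → ℕ => (∏ j, (-1 : ℝ) ^ q j * (m j + q j).choose (m j)) *
      ∏ j, μ j ^ (m j + q j) / (m j + q j)!) (∏ j, Real.exp (-μ j) * μ j ^ m j / (m j)!) := by
    simpa only [prod_mul_distrib] using
      hasSum_pi_prod fun j => hasSum_alternating_choose_mul_pow_div_factorial (μ j) (m j)
  have dominating : Summable fun q : ι → ℕ => ∏ j, A j ^ m j / (m j)! * (A j ^ q j / (q j)!) :=
    (hasSum_pi_prod fun j =>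
      ((Real.summable_pow_div_factorial (A j)).mul_left (A j ^ m j / (m j)!)).hasSum).summable
  simp only [← limit.tsum_eq, ← (hasSum_binomialMoment_inversion (X _) m).tsum_eq]
  refine tendsto_tsum_of_dominated_convergence dominating (fun q => (hlim (m + q)).const_mul _) ?_
  filter_upwards [hbound] with n hn q
  calc ‖(∏ j, (-1 : ℝ) ^ q j * (m j + q j).choose (m j)) * binomialMoment (X n) (m + q)‖
      = (∏ j, ((m j + q j).choose (m j) : ℝ)) * binomialMoment (X n) (m + q) := by
        simp [abs_of_nonneg (binomialMoment_nonneg (X n) (m + q))]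
    _ ≤ (∏ j, ((m j + q j).choose (m j) : ℝ)) * ∏ j, A j ^ (m j + q j) / (m j + q j)! := by
        gcongr
        exact hn (m + q)
    _ = ∏ j, A j ^ m j / (m j)! * (A j ^ q j / (q j)!) := by
        simp only [← prod_mul_distrib, choose_mul_pow_div_factorial]

section PerfectMatchings

/-- A perfect matching of `α`, encoded as a fixed-point-free involution, so that a chord diagram of
size `n` is a perfect matching of its `2n` endpoints. -/
abbrev PerfectMatching (α : Type*) :=
  {f : α → α // (∀ i, f (f i) = i) ∧ ∀ i, f i ≠ i}

/-- The product `(N - 1)(N - 3)⋯(N - 2R + 1)`, which counts the ways to choose one after the other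
the partners of `R` points while building a perfect matching of `N` points. -/
noncomputable def pairingFactor (N R : ℕ) : ℝ :=
  ∏ s ∈ range R, ((N : ℝ) - 2 * s - 1)

namespace PerfectMatching

variable {α ι : Type*} {a b : ι → α} {T : Finset ι}

/-- The transport of a perfect matching along a permutation of the points. -/
def conj (σ : Equiv.Perm α) (f : PerfectMatching α) : PerfectMatching α :=
  ⟨fun x => σ (f.1 (σ.symm x)), fun x => by simp [f.2.1],
    fun x h => f.2.2 (σ.symm x) (σ.injective (by simpa using h))⟩

lemma conj_injective (σ : Equiv.Perm α) : Function.Injective (conj σ) := fun f g h =>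
  Subtype.ext <| funext fun x => by
    simpa [conj] using congrFun (congrArg Subtype.val h) (σ x)

variable [DecidableEq α]

lemma card_biUnion_endpoints (hne : ∀ t ∈ T, a t ≠ b t)
    (hdisj : (T : Set ι).PairwiseDisjoint fun t => ({a t, b t} : Finset α)) :
    #(T.biUnion fun t => {a t, b t}) = 2 * #T := by
  rw [card_biUnion hdisj, sum_congr rfl fun t ht => card_pair (hne t ht), sum_const, smul_eq_mul,
    mul_comm]

variable [Fintype α]

/-- The perfect matchings that join `a t` to `b t` for every `t ∈ T`. -/
def containing (a b : ι → α) (T : Finset ι) : Finset (PerfectMatching α) :=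
  univ.filter fun f => ∀ t ∈ T, f.1 (a t) = b t

lemma apply_mem_biUnion_iff {f : PerfectMatching α} (hf : f ∈ containing a b T) {x : α} :
    f.1 x ∈ T.biUnion (fun t => {a t, b t}) ↔ x ∈ T.biUnion fun t => {a t, b t} := by
  have maps_to {y : α} (hy : y ∈ T.biUnion fun t => {a t, b t}) :
      f.1 y ∈ T.biUnion fun t => {a t, b t} := by
    simp only [containing, mem_filter, mem_univ, true_and] at hf
    simp only [mem_biUnion, mem_insert, mem_singleton] at hy ⊢
    obtain ⟨t, ht, rfl | rfl⟩ := hy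
    · exact ⟨t, ht, Or.inr (hf t ht)⟩
    · exact ⟨t, ht, Or.inl (by rw [← hf t ht, f.2.1])⟩
  exact ⟨fun h => by simpa only [f.2.1] using maps_to h, maps_to⟩

lemma pairwiseDisjoint_of_mem_containing {f : PerfectMatching α} (hf : f ∈ containing a b T)
    (hinj : Set.InjOn (fun t => ({a t, b t} : Finset α)) T) :
    (T : Set ι).PairwiseDisjoint fun t => ({a t, b t} : Finset α) := by
  simp only [containing, mem_filter, mem_univ, true_and] at hf
  have orbit {t : ι} (ht : t ∈ T) {x : α} (hx : x ∈ ({a t, b t} : Finset α)) :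
      ({a t, b t} : Finset α) = {x, f.1 x} := by
    rw [mem_insert, mem_singleton] at hx
    obtain rfl | rfl := hx
    · rw [hf t ht]
    · rw [← hf t ht, f.2.1, pair_comm]
  refine fun t ht u hu htu => disjoint_left.2 fun x hxt hxu => htu (hinj ht hu ?_)
  exact (orbit ht hxt).trans (orbit hu hxu).symm

lemma card_containing_apply_eq_le {x y z : α}
    (hy : y ∉ insert x (T.biUnion fun t => {a t, b t}))
    (hz : z ∉ insert x (T.biUnion fun t => {a t, b t})) :
    #{f ∈ containing a b T | f.1 x = y} ≤ #{f ∈ containing a b T | f.1 x = z} := by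
  have fixed {w : α} (hw : w ∈ insert x (T.biUnion fun t => {a t, b t})) :
      Equiv.swap y z w = w :=
    Equiv.swap_apply_of_ne_of_ne (fun h => hy (h ▸ hw)) fun h => hz (h ▸ hw)
  refine card_le_card_of_injOn (conj (Equiv.swap y z)) (fun f hf => ?_)
    (conj_injective _).injOn
  simp only [containing, coe_filter, mem_filter, mem_univ, true_and, Set.mem_ofPred_eq, conj,
    Equiv.symm_swap] at hf ⊢
  refine ⟨fun t ht => ?_, ?_⟩
  · have ha : a t ∈ T.biUnion fun t => {a t, b t} := mem_biUnion.2 ⟨t, ht, by simp⟩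
    have hb : b t ∈ T.biUnion fun t => {a t, b t} := mem_biUnion.2 ⟨t, ht, by simp⟩
    rw [fixed (mem_insert_of_mem ha), hf.1 t ht, fixed (mem_insert_of_mem hb)]
  · rw [fixed (mem_insert_self _ _), hf.2, Equiv.swap_apply_left]

/- Given the chords of `T`, the partner of `a u` is uniformly distributed over the remaining
`card α - 2 * #T - 1` points, by conjugation with transpositions. -/
lemma card_containing_eq_mul_card_containing_insert [DecidableEq ι] {u : ι} (hu : u ∉ T)
    (hne : ∀ t ∈ insert u T, a t ≠ b t)
    (hdisj : ((insert u T : Finset ι) : Set ι).PairwiseDisjoint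
      fun t => ({a t, b t} : Finset α)) :
    (#(containing a b T) : ℝ) =
      (Fintype.card α - 2 * #T - 1) * #(containing a b (insert u T)) := by
  set U := T.biUnion fun t => ({a t, b t} : Finset α)
  have fresh : Disjoint {a u, b u} U := by
    refine (disjoint_biUnion_right _ _ _).2 fun t ht => hdisj (by simp) (by simp [ht]) ?_
    rintro rfl
    exact hu ht
  have ha : a u ∉ U := disjoint_left.1 fresh (by simp)
  have hb : b u ∉ insert (a u) U := by
    simpa [(hne u (mem_insert_self u T)).symm] using disjoint_left.1 fresh (by simp : b u ∈ _)
  have partner (f) (hf : f ∈ containing a b T) : f.1 (a u) ∈ (insert (a u) U)ᶜ := by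
    rw [mem_compl, mem_insert, apply_mem_biUnion_iff hf]
    exact not_or.2 ⟨f.2.2 _, ha⟩
  have fibre (y) (hy : y ∈ (insert (a u) U)ᶜ) :
      #{f ∈ containing a b T | f.1 (a u) = y} = #(containing a b (insert u T)) := by
    rw [mem_compl] at hy
    have same : {f ∈ containing a b T | f.1 (a u) = b u} = containing a b (insert u T) := by
      ext f
      simp [containing, and_comm]
    rw [← same]
    exact (card_containing_apply_eq_le hy hb).antisymm (card_containing_apply_eq_le hb hy)
  have card_U : #U = 2 * #T :=
    card_biUnion_endpoints (fun t ht => hne t (mem_insert_of_mem ht))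
      (hdisj.subset (by simp))
  rw [card_eq_sum_card_fiberwise partner, sum_congr rfl fibre, sum_const, smul_eq_mul,
    card_compl, Nat.cast_mul, Nat.cast_sub (card_le_univ _), card_insert_of_notMem ha, card_U]
  push_cast
  ring

theorem card_eq_pairingFactor_mul_card_containing (hne : ∀ t ∈ T, a t ≠ b t)
    (hdisj : (T : Set ι).PairwiseDisjoint fun t => ({a t, b t} : Finset α)) :
    (Fintype.card (PerfectMatching α) : ℝ) =
      pairingFactor (Fintype.card α) #T * #(containing a b T) := by
  induction T using Finset.induction_on with
  | empty => simp [pairingFactor, containing]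
  | insert u T hu ih =>
    have hT := ih (fun t ht => hne t (mem_insert_of_mem ht)) (hdisj.subset (by simp))
    rw [hT, card_containing_eq_mul_card_containing_insert hu hne hdisj, card_insert_of_notMem hu,
      pairingFactor, pairingFactor, prod_range_succ, mul_assoc]

end PerfectMatching

end PerfectMatchings

section PairingFactor

lemma pairingFactor_pos {N R : ℕ} (h : 2 * R ≤ N) : 0 < pairingFactor N R := by
  refine prod_pos fun s hs => ?_
  have : (2 * (s + 1) : ℝ) ≤ N := by
    exact_mod_cast (by have := mem_range.1 hs; omega : 2 * (s + 1) ≤ N)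
  linarith

/- For `2R ≤ N` each factor satisfies `N - 2s - 1 ≥ (N / 2R) (R - s)`, and `R ^ R ≤ e ^ R * R!`. -/
lemma pow_le_mul_pairingFactor {N R : ℕ} (h : 2 * R ≤ N) :
    (N : ℝ) ^ R ≤ (2 * Real.exp 1) ^ R * pairingFactor N R := by
  have factors : (N : ℝ) ^ R * R ! ≤ (2 * R) ^ R * pairingFactor N R := by
    have factorial_eq : (R ! : ℝ) = ∏ s ∈ range R, ((R : ℝ) - s) := by
      rw [← Nat.descFactorial_self, Nat.descFactorial_eq_prod_range, Nat.cast_prod]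
      exact prod_congr rfl fun s hs => Nat.cast_sub (mem_range.1 hs).le
    have pow_eq (x : ℝ) : x ^ R = ∏ _s ∈ range R, x := by simp
    rw [factorial_eq, pairingFactor, pow_eq N, pow_eq (2 * R), ← prod_mul_distrib,
      ← prod_mul_distrib]
    have hN : (2 * R : ℝ) ≤ N := by exact_mod_cast h
    refine prod_le_prod (fun s hs => ?_) fun s hs => ?_ <;>
      have hs' : (s : ℝ) + 1 ≤ R := by exact_mod_cast mem_range.1 hs
    · exact mul_nonneg (Nat.cast_nonneg N) (by linarith)
    · nlinarith [(Nat.cast_nonneg s : (0 : ℝ) ≤ s)]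
  have stirling : (R : ℝ) ^ R ≤ Real.exp 1 ^ R * R ! := by
    have := Real.pow_div_factorial_le_exp (R : ℝ) (Nat.cast_nonneg R) R
    rwa [div_le_iff₀ (by positivity), ← Real.exp_one_pow] at this
  refine le_of_mul_le_mul_right ?_ (by positivity : (0 : ℝ) < R !)
  calc (N : ℝ) ^ R * R ! ≤ 2 ^ R * (R : ℝ) ^ R * pairingFactor N R := by rwa [← mul_pow]
    _ ≤ 2 ^ R * (Real.exp 1 ^ R * R !) * pairingFactor N R := by
      gcongr
      exact (pairingFactor_pos h).le
    _ = (2 * Real.exp 1) ^ R * pairingFactor N R * R ! := by rw [mul_pow]; ring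

lemma tendsto_pow_div_pairingFactor (R : ℕ) :
    Tendsto (fun N : ℕ => (N : ℝ) ^ R / pairingFactor N R) atTop (𝓝 1) := by
  have factor (s : ℕ) : Tendsto (fun N : ℕ => (N : ℝ) / (N - 2 * s - 1)) atTop (𝓝 1) := by
    simpa only [sub_sub, ← sub_eq_add_neg] using tendsto_natCast_div_add_atTop (-(2 * s + 1) : ℝ)
  have pow_eq (N : ℕ) : (N : ℝ) ^ R / pairingFactor N R =
      ∏ s ∈ range R, (N : ℝ) / (N - 2 * s - 1) := by
    rw [pairingFactor, prod_div_distrib, prod_const, card_range]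
  simpa only [pow_eq, prod_const_one] using tendsto_finsetProd (range R) fun s _ => factor s

lemma tendsto_choose_div_pow (r : ℕ) :
    Tendsto (fun N : ℕ => (N.choose r : ℝ) / (N : ℝ) ^ r) atTop (𝓝 (1 / r !)) := by
  have h := (isEquivalent_choose r).div
    (Asymptotics.IsEquivalent.refl (u := fun N : ℕ => (N : ℝ) ^ r))
  refine h.symm.tendsto_nhds (tendsto_const_nhds.congr' ?_)
  filter_upwards [eventually_gt_atTop 0] with N hN
  have : (N : ℝ) ^ r ≠ 0 := by positivity
  simp only [Pi.div_apply]
  field_simp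

end PairingFactor

section Families

variable {Ω ι β : Type*} [Fintype ι] [Fintype β]

/-- The families `(Sⱼ)` of subsets of `β` with prescribed sizes `#Sⱼ = rⱼ`. -/
noncomputable def families (β : Type*) [Fintype β] (r : ι → ℕ) : Finset (ι → Finset β) :=
  Fintype.piFinset fun j => powersetCard (r j) univ

lemma card_families (r : ι → ℕ) : #(families β r) = ∏ j, (Fintype.card β).choose (r j) := by
  simp [families, Fintype.card_piFinset]

lemma card_sigma_of_mem_families {r : ι → ℕ} {S : ι → Finset β} (hS : S ∈ families β r) :
    #(univ.sigma S) = ∑ j, r j := by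
  rw [card_sigma]
  exact sum_congr rfl fun j _ => (mem_powersetCard.1 (Fintype.mem_piFinset.1 hS j)).2

lemma binomialMoment_card_eq_sum_families [Fintype Ω] [DecidableEq β]
    (A : Ω → ι → Finset β) (r : ι → ℕ) :
    binomialMoment (fun ω j => #(A ω j)) r =
      ∑ S ∈ families β r, (#{ω | ∀ j, S j ⊆ A ω j} : ℝ) / Fintype.card Ω := by
  have count (ω : Ω) : ∏ j, (#(A ω j)).choose (r j) =
      #{S ∈ families β r | ∀ j, S j ⊆ A ω j} := by
    have : {S ∈ families β r | ∀ j, S j ⊆ A ω j} =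
        Fintype.piFinset fun j => powersetCard (r j) (A ω j) := by
      ext S
      simp [families, mem_powersetCard, forall_and, and_comm]
    simp [this, Fintype.card_piFinset]
  have double_count : ∑ ω, #{S ∈ families β r | ∀ j, S j ⊆ A ω j} =
      ∑ S ∈ families β r, #{ω | ∀ j, S j ⊆ A ω j} := by
    simp only [card_filter]
    exact sum_comm
  rw [binomialMoment, Fintype.expect_eq_sum_div_card, ← sum_div]
  simp only [← Nat.cast_prod, count, ← Nat.cast_sum, double_count]

end Families

section Conflicts

variable {τ α : Type*} [Fintype τ] [DecidableEq τ] [DecidableEq α]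

/- A set violating disjointness consists of a pair of conflicting elements and `R - 2` others. -/
lemma card_not_pairwiseDisjoint_mul_card_le {e : τ → Finset α} {d : ℕ}
    (hd : ∀ t, #{u | u ≠ t ∧ ¬ Disjoint (e t) (e u)} ≤ d) (R : ℕ) :
    #((powersetCard R univ).filter fun T : Finset τ => ¬ (T : Set τ).PairwiseDisjoint e) *
      Fintype.card τ ≤ d * Fintype.card τ ^ R := by
  set bad := (powersetCard R univ).filter fun T : Finset τ => ¬ (T : Set τ).PairwiseDisjoint e
  have conflict {T : Finset τ} (hT : T ∈ bad) :
      #T = R ∧ ∃ t ∈ T, ∃ u ∈ T.erase t, ¬ Disjoint (e t) (e u) := by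
    obtain ⟨hTR, hconf⟩ := mem_filter.1 hT
    simp only [Set.PairwiseDisjoint, Set.Pairwise, not_forall, Function.onFun, mem_coe] at hconf
    obtain ⟨t, ht, u, hu, htu, h⟩ := hconf
    exact ⟨(mem_powersetCard.1 hTR).2, t, ht, u, mem_erase.2 ⟨Ne.symm htu, hu⟩, h⟩
  rcases R with _ | _ | Q
  case zero | succ.zero =>
    have : bad = ∅ := by
      refine eq_empty_of_forall_notMem fun T hT => ?_
      obtain ⟨hcard, t, ht, u, hu, -⟩ := conflict hT
      have := card_erase_of_mem ht
      have := card_pos.2 ⟨u, hu⟩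
      omega
    simp [this]
  case succ.succ =>
    let pairs : Finset (Σ _ : τ, τ) :=
      univ.sigma fun t => {u | u ≠ t ∧ ¬ Disjoint (e t) (e u)}
    have card_pairs : #pairs ≤ Fintype.card τ * d := by
      rw [card_sigma, ← smul_eq_mul]
      exact sum_le_card_nsmul _ _ _ fun t _ => hd t
    have cover : bad ⊆ (pairs ×ˢ powersetCard Q univ).image
        fun q => insert q.1.1 (insert q.1.2 q.2) := by
      intro T hT
      obtain ⟨hcard, t, ht, u, hu, h⟩ := conflict hT
      refine mem_image.2 ⟨(⟨t, u⟩, (T.erase t).erase u), ?_, by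
        simp only [insert_erase hu, insert_erase ht]⟩
      simp [pairs, card_erase_of_mem hu, card_erase_of_mem ht, hcard, (mem_erase.1 hu).1, h]
    calc #bad * Fintype.card τ
        ≤ (Fintype.card τ * d) * Fintype.card τ ^ Q * Fintype.card τ := by
          gcongr
          refine (card_le_card cover).trans (card_image_le.trans ?_)
          rw [card_product, card_powersetCard, card_univ]
          exact Nat.mul_le_mul card_pairs (Nat.choose_le_pow _ _)
      _ = d * Fintype.card τ ^ (Q + 2) := by ring

end Conflicts

section ChordSystems

variable {ι α : Type*} [DecidableEq α]

/-- The two endpoints of the chord with label `⟨j, i⟩`, which leaves `i` and ends at `g j i`. -/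
def endpoints (g : ι → α → α) (t : Σ _ : ι, α) : Finset α := {t.2, g t.1 t.2}

/-- A system of candidate chords on the points `α`: for each kind `j`, one chord from each point `i`
to another point `g j i`, where distinct labels yield distinct chords. -/
structure IsChordSystem (g : ι → α → α) : Prop where
  apply_ne (j : ι) (i : α) : g j i ≠ i
  injective (j : ι) : Function.Injective (g j)
  endpoints_injective : Function.Injective (endpoints g)

variable [Fintype α]

/-- The chords of kind `j` in the system `g` that belong to the matching `f`, each represented by
the point it leaves. -/
def chordsOfKind (g : ι → α → α) (f : PerfectMatching α) (j : ι) : Finset α :=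
  {i | f.1 i = g j i}

variable [Fintype ι] {g : ι → α → α}

/-- The choices of `r j` chords of each kind `j` in the system `g`, all of them pairwise disjoint.
A choice is given by the sets of points that the chords leave. -/
noncomputable def disjointFamilies (g : ι → α → α) (r : ι → ℕ) : Finset (ι → Finset α) :=
  {S ∈ families α r |
    ((univ.sigma S : Finset (Σ _ : ι, α)) : Set _).PairwiseDisjoint (endpoints g)}

namespace IsChordSystem

lemma card_conflicts_le (hg : IsChordSystem g) (t : Σ _ : ι, α) :
    #{u | u ≠ t ∧ ¬ Disjoint (endpoints g t) (endpoints g u)} ≤ 4 * Fintype.card ι := by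
  have card_le_of_fst_injOn {s : Finset (Σ _ : ι, α)}
      (hs : Set.InjOn Sigma.fst (s : Set (Σ _ : ι, α))) : #s ≤ Fintype.card ι :=
    card_le_card_of_injOn Sigma.fst (fun _ _ => mem_univ _) hs
  have leaving (x : α) : #{u : Σ _ : ι, α | x = u.2} ≤ Fintype.card ι := by
    refine card_le_of_fst_injOn ?_
    rintro ⟨j, i⟩ hu ⟨j', i'⟩ hu' (rfl : j = j')
    simp_all
  have arriving (x : α) : #{u : Σ _ : ι, α | x = g u.1 u.2} ≤ Fintype.card ι := by
    refine card_le_of_fst_injOn ?_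
    rintro ⟨j, i⟩ hu ⟨j', i'⟩ hu' (rfl : j = j')
    have : i = i' := hg.injective j (by simp_all)
    rw [this]
  have through (x : α) : #{u | x ∈ endpoints g u} ≤ 2 * Fintype.card ι := by
    simp only [endpoints, mem_insert, mem_singleton, filter_or, two_mul]
    exact (card_union_le _ _).trans (add_le_add (leaving x) (arriving x))
  have cover : ({u | u ≠ t ∧ ¬ Disjoint (endpoints g t) (endpoints g u)} : Finset _) ⊆
      (endpoints g t).biUnion fun x => {u | x ∈ endpoints g u} := by
    intro u hu
    simpa [not_disjoint_iff] using (mem_filter.1 hu).2.2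
  calc _ ≤ #(endpoints g t) * (2 * Fintype.card ι) :=
        (card_le_card cover).trans (card_biUnion_le_card_mul _ _ _ fun x _ => through x)
    _ ≤ 2 * (2 * Fintype.card ι) := by
        gcongr
        exact card_le_two
    _ = 4 * Fintype.card ι := by ring

lemma two_mul_sum_le_card (hg : IsChordSystem g) {r : ι → ℕ} {S : ι → Finset α}
    (hS : S ∈ disjointFamilies g r) : 2 * ∑ j, r j ≤ Fintype.card α := by
  obtain ⟨hS, hdisj⟩ := mem_filter.1 hS
  rw [← card_sigma_of_mem_families hS,
    ← PerfectMatching.card_biUnion_endpoints (fun t _ => (hg.apply_ne t.1 t.2).symm) hdisj]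
  exact card_le_univ _

lemma card_families_sub_card_disjointFamilies_mul_le (hg : IsChordSystem g) (r : ι → ℕ) :
    (#(families α r) - #(disjointFamilies g r) : ℝ) * (Fintype.card ι * Fintype.card α) ≤
      4 * Fintype.card ι * (Fintype.card ι * Fintype.card α) ^ ∑ j, r j := by
  set bad := {S ∈ families α r |
    ¬ ((univ.sigma S : Finset (Σ _ : ι, α)) : Set _).PairwiseDisjoint (endpoints g)}
  have split : (#(families α r) - #(disjointFamilies g r) : ℝ) = #bad := by
    rw [sub_eq_iff_eq_add', disjointFamilies]
    exact_mod_cast (card_filter_add_card_filter_not _).symm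
  have bad_le : #bad ≤ #((powersetCard (∑ j, r j) univ).filter fun T : Finset (Σ _ : ι, α) =>
      ¬ (T : Set _).PairwiseDisjoint (endpoints g)) := by
    refine card_le_card_of_injOn (fun S => univ.sigma S) (fun S hS => ?_) fun S _ S' _ h => ?_
    · obtain ⟨hS, hconf⟩ := mem_filter.1 hS
      exact mem_filter.2
        ⟨mem_powersetCard.2 ⟨subset_univ _, card_sigma_of_mem_families hS⟩, hconf⟩
    · ext j i
      simpa using Finset.ext_iff.1 h ⟨j, i⟩
  have conflicts := card_not_pairwiseDisjoint_mul_card_le hg.card_conflicts_le (∑ j, r j)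
  rw [split]
  simp only [Fintype.card_sigma, sum_const, card_univ, smul_eq_mul] at conflicts
  exact_mod_cast (Nat.mul_le_mul_right _ bad_le).trans conflicts

lemma binomialMoment_card_chordsOfKind [Nonempty (PerfectMatching α)] (hg : IsChordSystem g)
    (r : ι → ℕ) :
    binomialMoment (fun f j => #(chordsOfKind g f j)) r =
      #(disjointFamilies g r) / pairingFactor (Fintype.card α) (∑ j, r j) := by
  have probability {S : ι → Finset α} (hS : S ∈ families α r) :
      (#{f | ∀ j, S j ⊆ chordsOfKind g f j} : ℝ) / Fintype.card (PerfectMatching α) =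
        if ((univ.sigma S : Finset (Σ _ : ι, α)) : Set _).PairwiseDisjoint (endpoints g)
        then (pairingFactor (Fintype.card α) (∑ j, r j))⁻¹ else 0 := by
    have event : ({f | ∀ j, S j ⊆ chordsOfKind g f j} : Finset (PerfectMatching α)) =
        PerfectMatching.containing Sigma.snd (fun t => g t.1 t.2) (univ.sigma S) := by
      ext f
      simp [PerfectMatching.containing, chordsOfKind, subset_iff, Sigma.forall]
    rw [event]
    split_ifs with hdisj
    · have total := PerfectMatching.card_eq_pairingFactor_mul_card_containing
        (fun t _ => (hg.apply_ne t.1 t.2).symm) hdisj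
      have pos : (Fintype.card (PerfectMatching α) : ℝ) ≠ 0 := by simp
      rw [card_sigma_of_mem_families hS] at total
      rw [total] at pos ⊢
      field_simp [left_ne_zero_of_mul pos, right_ne_zero_of_mul pos]
    · rw [card_eq_zero.2, Nat.cast_zero, zero_div]
      exact eq_empty_of_forall_notMem fun f hf => hdisj
        (PerfectMatching.pairwiseDisjoint_of_mem_containing hf hg.endpoints_injective.injOn)
  rw [binomialMoment_card_eq_sum_families, sum_congr rfl fun S hS => probability hS, ← sum_filter,
    sum_const, nsmul_eq_mul, disjointFamilies, div_eq_mul_inv]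

lemma binomialMoment_card_chordsOfKind_le [Nonempty (PerfectMatching α)] (hg : IsChordSystem g)
    (r : ι → ℕ) :
    binomialMoment (fun f j => #(chordsOfKind g f j)) r ≤
      ∏ j, (2 * Real.exp 1) ^ r j / (r j)! := by
  rw [hg.binomialMoment_card_chordsOfKind]
  rcases (disjointFamilies g r).eq_empty_or_nonempty with hempty | ⟨S, hS⟩
  · rw [hempty, card_empty, Nat.cast_zero, zero_div]
    positivity
  have hR := hg.two_mul_sum_le_card hS
  rw [div_le_iff₀ (pairingFactor_pos hR)]
  calc (#(disjointFamilies g r) : ℝ)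
      ≤ ∏ j, ((Fintype.card α).choose (r j) : ℝ) := by
        exact_mod_cast (card_filter_le _ _).trans (card_families r).le
    _ ≤ ∏ j, (Fintype.card α : ℝ) ^ r j / (r j)! :=
        prod_le_prod (fun _ _ => Nat.cast_nonneg _) fun j _ => Nat.choose_le_pow_div _ _
    _ = (Fintype.card α : ℝ) ^ (∑ j, r j) / ∏ j, ((r j)! : ℝ) := by
        rw [prod_div_distrib, prod_pow_eq_pow_sum]
    _ ≤ (2 * Real.exp 1) ^ (∑ j, r j) * pairingFactor (Fintype.card α) (∑ j, r j) /
          ∏ j, ((r j)! : ℝ) := by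
        gcongr
        exact pow_le_mul_pairingFactor hR
    _ = (∏ j, (2 * Real.exp 1) ^ r j / (r j)!) *
          pairingFactor (Fintype.card α) (∑ j, r j) := by
        rw [prod_div_distrib, prod_pow_eq_pow_sum]
        ring

end IsChordSystem

end ChordSystems

section PoissonLimit

variable {κ ι : Type*} [Fintype ι] {l : Filter κ} {α : κ → Type*} [∀ n, Fintype (α n)]

lemma tendsto_card_families_div_pow (hcard : Tendsto (fun n => Fintype.card (α n)) l atTop)
    (r : ι → ℕ) :
    Tendsto (fun n => (#(families (α n) r) : ℝ) / (Fintype.card (α n) : ℝ) ^ ∑ j, r j) l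
      (𝓝 (∏ j, 1 / (r j)!)) := by
  simp only [card_families, Nat.cast_prod, ← prod_pow_eq_pow_sum, ← prod_div_distrib]
  exact tendsto_finsetProd _ fun j _ => (tendsto_choose_div_pow (r j)).comp hcard

variable [Nonempty ι] [∀ n, DecidableEq (α n)] {g : ∀ n, ι → α n → α n}

lemma tendsto_card_disjointFamilies_div_pow (hg : ∀ᶠ n in l, IsChordSystem (g n))
    (hcard : Tendsto (fun n => Fintype.card (α n)) l atTop) (r : ι → ℕ) :
    Tendsto (fun n => (#(disjointFamilies (g n) r) : ℝ) / (Fintype.card (α n) : ℝ) ^ ∑ j, r j) l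
      (𝓝 (∏ j, 1 / (r j)!)) := by
  set c : ℝ := (Fintype.card ι : ℝ)
  have c_pos : 0 < c := by simp [c, Fintype.card_pos]
  have card_tendsto : Tendsto (fun n => (Fintype.card (α n) : ℝ)) l atTop :=
    tendsto_natCast_atTop_atTop.comp hcard
  have bad : Tendsto (fun n => (#(families (α n) r) - #(disjointFamilies (g n) r) : ℝ) /
      (Fintype.card (α n) : ℝ) ^ ∑ j, r j) l (𝓝 0) := by
    refine squeeze_zero' (Eventually.of_forall fun n => ?_) ?_
      (card_tendsto.const_div_atTop (4 * c ^ ∑ j, r j))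
    · have : (#(disjointFamilies (g n) r) : ℝ) ≤ #(families (α n) r) := by
        exact_mod_cast card_filter_le _ _
      exact div_nonneg (sub_nonneg.2 this) (by positivity)
    · filter_upwards [hg, card_tendsto.eventually_gt_atTop 0] with n hn hpos
      rw [div_le_div_iff₀ (by positivity) hpos]
      refine le_of_mul_le_mul_left ?_ c_pos
      have := hn.card_families_sub_card_disjointFamilies_mul_le r
      rw [mul_pow] at this
      linarith
  have := (tendsto_card_families_div_pow hcard r).sub bad
  simpa only [← sub_div, sub_sub_cancel, sub_zero] using this

lemma tendsto_binomialMoment_card_chordsOfKind [∀ n, Nonempty (PerfectMatching (α n))]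
    (hg : ∀ᶠ n in l, IsChordSystem (g n))
    (hcard : Tendsto (fun n => Fintype.card (α n)) l atTop) (r : ι → ℕ) :
    Tendsto (fun n => binomialMoment (fun f j => #(chordsOfKind (g n) f j)) r) l
      (𝓝 (∏ j, 1 / (r j)!)) := by
  have lim := (tendsto_card_disjointFamilies_div_pow hg hcard r).mul
    ((tendsto_pow_div_pairingFactor (∑ j, r j)).comp hcard)
  rw [mul_one] at lim
  refine lim.congr' ?_
  filter_upwards [hg, hcard.eventually_gt_atTop 0] with n hn hpos
  rw [hn.binomialMoment_card_chordsOfKind, Function.comp_apply, div_mul_div_cancel₀ (by positivity)]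

theorem tendsto_expect_card_chordsOfKind_eq [∀ n, Nonempty (PerfectMatching (α n))]
    (hg : ∀ᶠ n in l, IsChordSystem (g n))
    (hcard : Tendsto (fun n => Fintype.card (α n)) l atTop) (m : ι → ℕ) :
    Tendsto (fun n => 𝔼 f, if (fun j => #(chordsOfKind (g n) f j)) = m then (1 : ℝ) else 0) l
      (𝓝 (∏ j, Real.exp (-1) / (m j)!)) := by
  have hlim (r : ι → ℕ) := tendsto_binomialMoment_card_chordsOfKind hg hcard r
  simpa only [one_pow, mul_one] using
    tendsto_expect_eq_poisson_of_tendsto_binomialMoment (μ := fun _ => 1)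
      (A := fun _ => 2 * Real.exp 1)
      (hg.mono fun n hn r => hn.binomialMoment_card_chordsOfKind_le r)
      (by simpa only [one_pow] using hlim) m

end PoissonLimit

section ShortChords

/-- The point of the circle reached from `i` by skipping `j` points clockwise. -/
def arcEnd {N : ℕ} (j : ℕ) (i : Fin N) : Fin N :=
  ⟨(i + j + 1) % N, Nat.mod_lt _ i.pos⟩

lemma arcEnd_val_eq {N j : ℕ} (hj : j < N) (i : Fin N) :
    (arcEnd j i : ℕ) = i + j + 1 ∨ (arcEnd j i : ℕ) + N = i + j + 1 := by
  have hi := i.2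
  rcases lt_or_ge (i + j + 1) N with h | h
  · exact Or.inl (Nat.mod_eq_of_lt h)
  · refine Or.inr ?_
    have : (arcEnd j i : ℕ) = i + j + 1 - N := by
      rw [arcEnd, Fin.val_mk, Nat.mod_eq_sub_mod h, Nat.mod_eq_of_lt (by omega)]
    omega

lemma arcEnd_arcEnd_ne {N j j' : ℕ} (h : j + j' + 2 < N) (i : Fin N) :
    arcEnd j (arcEnd j' i) ≠ i := by
  intro hi
  have := congrArg Fin.val hi
  rcases arcEnd_val_eq (by omega : j' < N) i with h₁ | h₁ <;>
    rcases arcEnd_val_eq (by omega : j < N) (arcEnd j' i) with h₂ | h₂ <;> omega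

lemma isChordSystem_arcEnd {k N : ℕ} (h : 2 * (k + 1) < N) :
    IsChordSystem fun (j : Fin (k + 1)) (i : Fin N) => arcEnd j i where
  apply_ne j i hi := by
    have := congrArg Fin.val hi
    rcases arcEnd_val_eq (by omega : (j : ℕ) < N) i with h₁ | h₁ <;> omega
  injective j i i' hii' := by
    have : (arcEnd j i : ℕ) = arcEnd j i' := congrArg Fin.val hii'
    have h₁ := arcEnd_val_eq (by omega : (j : ℕ) < N) i
    have h₂ := arcEnd_val_eq (by omega : (j : ℕ) < N) i'
    exact Fin.ext (by omega)
  endpoints_injective := by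
    rintro ⟨j, i⟩ ⟨j', i'⟩ (heq : ({i, arcEnd j i} : Finset (Fin N)) = {i', arcEnd j' i'})
    rw [← coe_inj, coe_pair, coe_pair, Set.pair_eq_pair_iff] at heq
    rcases heq with ⟨rfl, hend⟩ | ⟨rfl, hend⟩
    · have : (arcEnd j i : ℕ) = arcEnd j' i := congrArg Fin.val hend
      have h₁ := arcEnd_val_eq (by omega : (j : ℕ) < N) i
      have h₂ := arcEnd_val_eq (by omega : (j' : ℕ) < N) i
      rw [show j = j' from Fin.ext (by omega)]
    · exact absurd hend (arcEnd_arcEnd_ne (by omega) i')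

lemma chordLength_eq_iff {n j : ℕ} (h : j + 1 < n) (C : ChordDiagram n) (x : Fin (2 * n)) :
    chordLength C x = j ↔ C.1 x = arcEnd j x ∨ x = arcEnd j (C.1 x) := by
  have h₁ := arcEnd_val_eq (by omega : j < 2 * n) x
  have h₂ := arcEnd_val_eq (by omega : j < 2 * n) (C.1 x)
  have hne : (C.1 x : ℕ) ≠ x := fun h => C.2.2 x (Fin.ext h)
  simp only [chordLength, Fin.ext_iff]
  omega

/- A chord of length `j` could be counted twice on the right only if it cut the circle into two arcs
of `j` points each, that is, if `2n = 2j + 2`. -/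
lemma lengthCount_eq_card_chordsOfKind {n j : ℕ} (h : j + 1 < n) (C : ChordDiagram n) :
    lengthCount n j C = #(chordsOfKind arcEnd C j) := by
  symm
  refine card_bij (fun i _ => chordRep C i) (fun i hi => ?_) (fun i hi i' hi' hii' => ?_)
    fun x hx => ?_ <;>
    simp only [chordsOfKind, mem_filter, mem_univ, true_and, chordLength_eq_iff h] at *
  · rcases (C.2.2 i).lt_or_gt with hlt | hlt
    · rw [chordRep, min_eq_right hlt.le, C.2.1]
      exact ⟨hlt, Or.inr hi⟩
    · rw [chordRep, min_eq_left hlt.le]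
      exact ⟨hlt, Or.inl hi⟩
  · by_contra hne
    have partner : i' = C.1 i := by
      rcases min_choice i (C.1 i) with h₁ | h₁ <;> rcases min_choice i' (C.1 i') with h₂ | h₂ <;>
        rw [chordRep, chordRep, h₁, h₂] at hii'
      · exact absurd hii' hne
      · rw [hii', C.2.1]
      · exact hii'.symm
      · exact absurd (C.2.1 i ▸ C.2.1 i' ▸ congrArg C.1 hii') hne
    refine arcEnd_arcEnd_ne (by omega : j + j + 2 < 2 * n) i ?_
    rw [← hi, ← partner, ← hi', partner, C.2.1]
  · rcases hx with ⟨hlt, hx | hx⟩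
    · exact ⟨x, hx, min_eq_left hlt.le⟩
    · refine ⟨C.1 x, by rw [C.2.1]; exact hx, ?_⟩
      rw [chordRep, C.2.1, min_eq_right hlt.le]

instance {n : ℕ} : Nonempty (ChordDiagram n) :=
  ⟨Fin.rev, Fin.rev_rev, fun i h => by rw [Fin.ext_iff, Fin.val_rev] at h; omega⟩

lemma prob_eq_expect (n : ℕ) (E : ChordDiagram n → Prop) [DecidablePred E] :
    prob n E = 𝔼 C, if E C then (1 : ℝ) else 0 := by
  rw [prob, Fintype.expect_eq_sum_div_card, sum_boole, card_univ]
  congr!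

end ShortChords

theorem stmt5 (k : ℕ) (m : ℕ → ℕ) :
    Filter.Tendsto
      (fun n : ℕ => prob n (fun C => ∀ j ≤ k, lengthCount n j C = m j))
      Filter.atTop
      (nhds (∏ j ∈ Finset.range (k+1), Real.exp (-1) / ((m j).factorial : ℝ))) := by
  simp only [prob_eq_expect, Finset.prod_range]
  have hg : ∀ᶠ n : ℕ in atTop,
      IsChordSystem fun (j : Fin (k + 1)) (i : Fin (2 * n)) => arcEnd j i :=
    (eventually_gt_atTop (k + 1)).mono fun n hn => isChordSystem_arcEnd (by omega)
  have hcard : Tendsto (fun n : ℕ => Fintype.card (Fin (2 * n))) atTop atTop := by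
    simp only [Fintype.card_fin]
    exact tendsto_id.const_mul_atTop' two_pos
  refine (tendsto_expect_card_chordsOfKind_eq hg hcard fun j => m j).congr' ?_
  filter_upwards [eventually_gt_atTop (k + 1)] with n hn
  -- The two sides carry different `Fintype` instances on chord diagrams.
  refine expect_congr (by congr!) fun C _ => if_congr ?_ rfl rfl
  simp only [funext_iff, Fin.forall_iff, Nat.lt_succ_iff]
  exact forall₂_congr fun j hj => by
    rw [lengthCount_eq_card_chordsOfKind (by omega)]
    rfl
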